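/- arXiv:1507.05351 — 3 statements merged into one kernel-verified Lean document; each statement's English description precedes it below -/
import Mathlib

section
/- Let ℓ be a loss function with constant c as in (A3), and X ∈ M^θ. Then the multivariate shortfall risk R(X) := inf{∑_k m_k : m ∈ A(X)} is a real number (the infimum is over a nonempty set and is finite); in particular R(X) ≥ ∑_k E[X_k] − c. -/
/-!
Nonemptiness of the acceptance set: choose `x₀` with `ℓ x₀ < 0` and test the constants
`m = n • 1`. As `n → ∞`, `X ω - n` eventually lies below `x₀`, so by monotonicity the positive part
of `ℓ (X - n)` is eventually `0` and its negative part eventually at least that of `ℓ x₀`.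
The positive parts are dominated by that of `ℓ |X|`, which is integrable because `X` is in the Orlicz
heart; hence their integrals tend to `0` (`tendsto_lintegral_of_dominated_convergence`), while the
integrals of the negative parts, truncated at the level of `ℓ x₀`, tend to a positive limit. So
`E[ℓ (X - n)] ≤ 0` for large `n`.

Lower bound: `ℓ x ≥ ∑ k, x k - c` gives `|X k| ≤ ℓ |X| + c`, so each `X k` is integrable. If `m` is acceptable,
then integrating `ℓ (X - m) ≥ ∑ k, (X k - m k) - c` gives `∑ k, E[X k] - ∑ k, m k - c ≤ 0`.
-/

open MeasureTheory ENNReal Pointwise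

/-- The positive part of an extended real number, valued in `ℝ≥0∞`. -/
noncomputable def ERealPos (e : EReal) : ℝ≥0∞ := (max e 0).abs

/-- Extended expectation of a `(-∞,∞]`-valued integrand, as an extended real. -/
noncomputable def eexp {Ω : Type*} [MeasurableSpace Ω] (P : Measure Ω)
    (g : Ω → EReal) : EReal :=
  ((∫⁻ ω, ERealPos (g ω) ∂P) : EReal) - ((∫⁻ ω, ERealPos (-(g ω)) ∂P) : EReal)

/-- A loss function `ℓ : ℝ^d → (-∞,∞]` with constant `c` as in (A3):
(A1) increasing, (A2) convex, lower semicontinuous with `inf ℓ < 0`,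
(A3) `ℓ x ≥ ∑ₖ xₖ - c`. -/
structure IsLossFunction {d : ℕ} (ℓ : (Fin d → ℝ) → EReal) (c : ℝ) : Prop where
  mono : Monotone ℓ
  convex : ∀ x y : Fin d → ℝ, ∀ a b : ℝ, 0 ≤ a → 0 ≤ b → a + b = 1 →
    ℓ (a • x + b • y) ≤ (a : EReal) * ℓ x + (b : EReal) * ℓ y
  lsc : LowerSemicontinuous ℓ
  inf_lt_zero : (⨅ x, ℓ x) < 0
  lower_bound : ∀ x, ((∑ k, x k : ℝ) : EReal) - (c : EReal) ≤ ℓ x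

/-- Membership in the Orlicz heart `M^θ` where `θ x = ℓ |x|`:
`X` is measurable and `E[θ(λX)] < ∞` for all `λ > 0`. -/
def MemOrliczHeart {Ω : Type*} [MeasurableSpace Ω] {d : ℕ}
    (ℓ : (Fin d → ℝ) → EReal) (P : Measure Ω) (X : Ω → Fin d → ℝ) : Prop :=
  Measurable X ∧ ∀ lam : ℝ, 0 < lam → eexp P (fun ω => ℓ |lam • X ω|) < ⊤

/-- The acceptance set `A(X) = {m : E[ℓ(X - m)] ≤ 0}`. -/
def acceptSet {Ω : Type*} [MeasurableSpace Ω] {d : ℕ}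
    (ℓ : (Fin d → ℝ) → EReal) (P : Measure Ω) (X : Ω → Fin d → ℝ) : Set (Fin d → ℝ) :=
  {m | eexp P (fun ω => ℓ (X ω - m)) ≤ 0}

/-- The multivariate shortfall risk `R(X) = inf {∑ₖ mₖ : m ∈ A(X)}`. -/
noncomputable def shortfallRisk {Ω : Type*} [MeasurableSpace Ω] {d : ℕ}
    (ℓ : (Fin d → ℝ) → EReal) (P : Measure Ω) (X : Ω → Fin d → ℝ) : ℝ :=
  sInf {s : ℝ | ∃ m ∈ acceptSet ℓ P X, s = ∑ k, m k}

lemma ERealPos_eq_toENNReal (e : EReal) : ERealPos e = e.toENNReal := by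
  unfold ERealPos
  induction e with
  | bot => simp
  | top => simp
  | coe x =>
    rw [show (max (x : EReal) 0) = ((max x 0 : ℝ) : EReal) by norm_cast]
    rw [EReal.abs_def, abs_of_nonneg (le_max_right _ _)]
    simp [EReal.toENNReal_of_ne_top]

lemma ERealPos_mono {a b : EReal} (h : a ≤ b) : ERealPos a ≤ ERealPos b := by
  rw [ERealPos_eq_toENNReal, ERealPos_eq_toENNReal]
  exact EReal.toENNReal_le_toENNReal h

lemma ERealPos_coe (x : ℝ) : ERealPos (x : EReal) = ENNReal.ofReal x := by
  rw [ERealPos_eq_toENNReal]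
  simp [EReal.toENNReal_of_ne_top]

lemma ERealPos_of_nonpos {e : EReal} (h : e ≤ 0) : ERealPos e = 0 := by
  rw [ERealPos_eq_toENNReal, EReal.toENNReal_of_nonpos h]

/-- This needs no finiteness, since `⊤ - ⊤ = ⊥` in `EReal`. -/
lemma eexp_nonpos_iff {Ω : Type*} [MeasurableSpace Ω] (P : Measure Ω) (g : Ω → EReal) :
    eexp P g ≤ 0 ↔ ∫⁻ ω, ERealPos (g ω) ∂P ≤ ∫⁻ ω, ERealPos (-(g ω)) ∂P := by
  unfold eexp
  rw [EReal.sub_nonpos, EReal.coe_ennreal_le_coe_ennreal_iff]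

lemma measurable_ERealPos : Measurable ERealPos := by
  have : ERealPos = EReal.toENNReal := funext ERealPos_eq_toENNReal
  rw [this]
  exact measurable_ereal_toENNReal

namespace IsLossFunction

variable {Ω : Type*} [MeasurableSpace Ω] {P : Measure Ω} [IsProbabilityMeasure P]
  {d : ℕ} {ℓ : (Fin d → ℝ) → EReal} {c : ℝ} {X : Ω → Fin d → ℝ}

/-- The negative part of `ℓ |X|` is bounded by `max c 0`, so a finite expectation forces the positive
part to have finite integral. -/
lemma lintegral_pos_lt_top (hℓ : IsLossFunction ℓ c) (hX : MemOrliczHeart ℓ P X) :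
    ∫⁻ ω, ERealPos (ℓ |X ω|) ∂P < ⊤ := by
  have h := hX.2 1 one_pos
  simp only [one_smul] at h
  have hneg : ∫⁻ ω, ERealPos (-(ℓ |X ω|)) ∂P < ⊤ := by
    calc ∫⁻ ω, ERealPos (-(ℓ |X ω|)) ∂P ≤ ∫⁻ _, ENNReal.ofReal c ∂P := by
          refine lintegral_mono fun ω => ?_
          rw [← ERealPos_coe]
          apply ERealPos_mono
          rw [EReal.neg_le]
          refine le_trans ?_ (hℓ.lower_bound _)
          have : 0 ≤ ∑ k, |X ω| k := Finset.sum_nonneg fun k _ => abs_nonneg (X ω k)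
          norm_cast
          linarith
      _ < ⊤ := by simp
  by_contra hpos
  rw [not_lt, top_le_iff] at hpos
  unfold eexp at h
  rw [hpos] at h
  lift (∫⁻ ω, ERealPos (-(ℓ |X ω|)) ∂P) to NNReal using hneg.ne with r
  simp at h

lemma integrable_coord (hℓ : IsLossFunction ℓ c) (hX : MemOrliczHeart ℓ P X) (k : Fin d) :
    Integrable (fun ω => X ω k) P := by
  refine ⟨((measurable_pi_apply k).comp hX.1).aestronglyMeasurable, ?_⟩
  rw [hasFiniteIntegral_iff_norm]
  calc ∫⁻ ω, ENNReal.ofReal ‖X ω k‖ ∂P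
      ≤ ∫⁻ ω, (ERealPos (ℓ |X ω|) + ENNReal.ofReal c) ∂P := by
        refine lintegral_mono fun ω => ?_
        have h1 : |X ω k| ≤ ∑ j, |X ω| j :=
          Finset.single_le_sum (f := fun j => |X ω j|) (fun j _ => abs_nonneg _)
            (Finset.mem_univ k)
        calc ENNReal.ofReal ‖X ω k‖ ≤ ENNReal.ofReal ((∑ j, |X ω| j - c) + c) := by
              apply ENNReal.ofReal_le_ofReal
              rw [Real.norm_eq_abs]
              linarith
          _ ≤ ENNReal.ofReal (∑ j, |X ω| j - c) + ENNReal.ofReal c := ENNReal.ofReal_add_le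
          _ ≤ _ := by
              gcongr
              rw [← ERealPos_coe]
              apply ERealPos_mono
              exact_mod_cast hℓ.lower_bound |X ω|
    _ < ⊤ := by
        rw [lintegral_add_right _ measurable_const]
        simpa using hℓ.lintegral_pos_lt_top hX

lemma le_of_mem_acceptSet (hℓ : IsLossFunction ℓ c) (hX : MemOrliczHeart ℓ P X)
    {m : Fin d → ℝ} (hm : m ∈ acceptSet ℓ P X) :
    (∑ k, ∫ ω, X ω k ∂P) - c ≤ ∑ k, m k := by
  have hm' := (eexp_nonpos_iff P _).1 hm
  have hint := fun k => hℓ.integrable_coord hX k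
  have hsum : Integrable (fun ω => ∑ k, X ω k) P := integrable_finsetSum _ fun k _ => hint k
  have hlb : ∀ ω, ((∑ k, X ω k - (∑ k, m k + c) : ℝ) : EReal) ≤ ℓ (X ω - m) := fun ω => by
    refine le_trans (le_of_eq ?_) (hℓ.lower_bound _)
    norm_cast
    simp only [Pi.sub_apply, Finset.sum_sub_distrib]
    ring
  have hh : Integrable (fun ω => ∑ k, X ω k - (∑ k, m k + c)) P :=
    hsum.sub (integrable_const _)
  have key : ∫ ω, (∑ k, X ω k - (∑ k, m k + c)) ∂P ≤ 0 := by
    rw [integral_eq_lintegral_pos_part_sub_lintegral_neg_part hh, sub_nonpos]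
    apply ENNReal.toReal_mono
    · exact (hh.neg.lintegral_lt_top).ne
    · calc _ ≤ ∫⁻ ω, ERealPos (ℓ (X ω - m)) ∂P := by
            refine lintegral_mono fun ω => ?_
            rw [← ERealPos_coe]
            exact ERealPos_mono (hlb ω)
        _ ≤ ∫⁻ ω, ERealPos (-(ℓ (X ω - m))) ∂P := hm'
        _ ≤ _ := by
            refine lintegral_mono fun ω => ?_
            rw [← ERealPos_coe]
            apply ERealPos_mono
            rw [EReal.coe_neg]
            exact EReal.neg_le_neg_iff.2 (hlb ω)
  rw [integral_sub hsum (integrable_const _), integral_finsetSum _ fun k _ => hint k] at key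
  simp at key
  linarith

lemma acceptSet_nonempty (hℓ : IsLossFunction ℓ c) (hX : MemOrliczHeart ℓ P X) :
    (acceptSet ℓ P X).Nonempty := by
  obtain ⟨x₀, hx₀⟩ := iInf_lt_iff.1 hℓ.inf_lt_zero
  have hmeas : ∀ n : ℕ, Measurable fun ω => ℓ (X ω - fun _ => (n : ℝ)) := fun n =>
    hℓ.lsc.measurable.comp (hX.1.sub measurable_const)
  have hev : ∀ ω, ∀ᶠ n : ℕ in Filter.atTop, ℓ (X ω - fun _ => (n : ℝ)) ≤ ℓ x₀ := fun ω => by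
    have : ∀ᶠ n : ℕ in Filter.atTop, ∀ k, X ω k - x₀ k ≤ n :=
      Filter.eventually_all.2 fun k =>
        tendsto_natCast_atTop_atTop.eventually_ge_atTop (X ω k - x₀ k)
    filter_upwards [this] with n hn
    refine hℓ.mono fun k => ?_
    have := hn k
    simp only [Pi.sub_apply]
    linarith
  have hpos : Filter.Tendsto (fun n : ℕ => ∫⁻ ω, ERealPos (ℓ (X ω - fun _ => (n : ℝ))) ∂P)
      Filter.atTop (nhds (∫⁻ _, 0 ∂P)) := by
    refine tendsto_lintegral_of_dominated_convergence (fun ω => ERealPos (ℓ |X ω|))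
      (fun n => measurable_ERealPos.comp (hmeas n)) (fun n => ae_of_all _ fun ω => ?_)
      (hℓ.lintegral_pos_lt_top hX).ne (ae_of_all _ fun ω => ?_)
    · refine ERealPos_mono (hℓ.mono fun k => ?_)
      have h1 : X ω k ≤ |X ω k| := le_abs_self _
      have h2 : (0 : ℝ) ≤ n := Nat.cast_nonneg n
      change X ω k - n ≤ |X ω k|
      linarith
    · refine tendsto_const_nhds.congr' ?_
      filter_upwards [hev ω] with n hn
      exact (ERealPos_of_nonpos (hn.trans hx₀.le)).symm
  -- Truncation at the level `δ` keeps the negative parts dominated by a constant.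
  set δ : ℝ≥0∞ := ERealPos (-(ℓ x₀)) with hδ
  have hδ0 : 0 < δ := by
    rw [hδ, ERealPos_eq_toENNReal, EReal.toENNReal_pos_iff]
    simpa using EReal.neg_lt_neg_iff.2 hx₀
  have hδt : δ ≠ ⊤ := by
    refine ne_top_of_le_ne_top ENNReal.ofReal_ne_top
      (b := ENNReal.ofReal (-(∑ k, x₀ k - c))) ?_
    rw [← ERealPos_coe, EReal.coe_neg]
    exact ERealPos_mono (EReal.neg_le_neg_iff.2 (by exact_mod_cast hℓ.lower_bound x₀))
  have hneg : Filter.Tendsto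
      (fun n : ℕ => ∫⁻ ω, min (ERealPos (-(ℓ (X ω - fun _ => (n : ℝ))))) δ ∂P)
      Filter.atTop (nhds (∫⁻ _, δ ∂P)) := by
    refine tendsto_lintegral_of_dominated_convergence (fun _ => δ)
      (fun n => (measurable_ERealPos.comp (hmeas n).neg).min measurable_const)
      (fun n => ae_of_all _ fun ω => min_le_right _ _) (by simpa using hδt)
      (ae_of_all _ fun ω => ?_)
    refine tendsto_const_nhds.congr' ?_
    filter_upwards [hev ω] with n hn
    exact (min_eq_right (ERealPos_mono (EReal.neg_le_neg_iff.2 hn))).symm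
  simp only [lintegral_zero, lintegral_const, measure_univ, mul_one] at hpos hneg
  obtain ⟨n, hn⟩ := (hpos.eventually_lt hneg hδ0).exists
  refine ⟨fun _ => (n : ℝ), (eexp_nonpos_iff P _).2 (hn.le.trans ?_)⟩
  exact lintegral_mono fun ω => min_le_left _ _

end IsLossFunction

/-- Theorem 2.9 (finiteness): the infimum defining `R(X)` is over a nonempty set,
bounded below, and `R(X) ≥ ∑ₖ E[Xₖ] - c`. -/
theorem shortfallRisk_real
    {Ω : Type*} [MeasurableSpace Ω] (P : Measure Ω) [IsProbabilityMeasure P]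
    {d : ℕ} (ℓ : (Fin d → ℝ) → EReal) (c : ℝ) (hℓ : IsLossFunction ℓ c)
    (X : Ω → Fin d → ℝ) (hX : MemOrliczHeart ℓ P X) :
    {s : ℝ | ∃ m ∈ acceptSet ℓ P X, s = ∑ k, m k}.Nonempty ∧
      BddBelow {s : ℝ | ∃ m ∈ acceptSet ℓ P X, s = ∑ k, m k} ∧
      (∑ k, ∫ ω, X ω k ∂P) - c ≤ shortfallRisk ℓ P X := by
  have hne : {s : ℝ | ∃ m ∈ acceptSet ℓ P X, s = ∑ k, m k}.Nonempty := by
    obtain ⟨m, hm⟩ := hℓ.acceptSet_nonempty hX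
    exact ⟨_, m, hm, rfl⟩
  have hlb : ∀ s ∈ {s : ℝ | ∃ m ∈ acceptSet ℓ P X, s = ∑ k, m k},
      (∑ k, ∫ ω, X ω k ∂P) - c ≤ s := by
    rintro s ⟨m, hm, rfl⟩
    exact hℓ.le_of_mem_acceptSet hX hm
  exact ⟨hne, ⟨_, hlb⟩, le_csInf hne hlb⟩
end

section
/- Let ℓ be a loss function that is positively homogeneous (ℓ(tx) = t·ℓ(x) for all t > 0, x ∈ ℝ^d). Then the multivariate shortfall risk R is positively homogeneous on M^θ: R(λX) = λR(X) for every X ∈ M^θ and every λ > 0. -/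
/-!
The acceptance sets scale: `A(λX) = λ • A(X)`. Indeed `λX - λm = λ(X - m)`, so by homogeneity the
integrand is multiplied by `λ`, and so are the integrals of its positive and negative parts; hence
the sign condition `E[ℓ(X - m)] ≤ 0` is unaffected. The infimum of a scaled set of reals is the
scaled infimum (`Real.sInf_smul_of_nonneg`, which holds for arbitrary sets because the junk value of
`sInf` is `0`), so neither finiteness of the risk nor integrability of the loss has to be discussed.
-/


open MeasureTheory ENNReal Pointwise

theorem ERealPos_coe_mul {t : ℝ} (ht : 0 < t) (e : EReal) :
    ERealPos ((t : EReal) * e) = ENNReal.ofReal t * ERealPos e := by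
  have ht' : (0 : EReal) ≤ (t : EReal) := by exact_mod_cast ht.le
  have hmax : max ((t : EReal) * e) 0 = (t : EReal) * max e 0 := by
    rcases le_total e 0 with h | h
    · rw [max_eq_right h, mul_zero, max_eq_right (mul_nonpos_of_nonneg_of_nonpos ht' h)]
    · rw [max_eq_left h, max_eq_left (mul_nonneg ht' h)]
  rw [ERealPos, ERealPos, hmax, EReal.abs_mul, EReal.abs_def, abs_of_pos ht]

/-- The sign of the extended expectation is unchanged by scaling; no measurability of `g` is
needed because the scaling constant is finite. -/
theorem eexp_coe_mul_nonpos_iff {Ω : Type*} [MeasurableSpace Ω] (P : Measure Ω)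
    {t : ℝ} (ht : 0 < t) (g : Ω → EReal) :
    eexp P (fun ω => (t : EReal) * g ω) ≤ 0 ↔ eexp P g ≤ 0 := by
  have h0 : ENNReal.ofReal t ≠ 0 := (ENNReal.ofReal_pos.2 ht).ne'
  have hneg : ∀ e : EReal, -((t : EReal) * e) = (t : EReal) * -e := fun e => (mul_neg _ _).symm
  -- In `EReal`, `⊤ - ⊤ = ⊥`, so `a - b ≤ 0 ↔ a ≤ b` holds without finiteness assumptions.
  simp only [eexp, hneg, ERealPos_coe_mul ht, lintegral_const_mul' _ _ ENNReal.ofReal_ne_top,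
    EReal.sub_nonpos, EReal.coe_ennreal_le_coe_ennreal_iff]
  exact ENNReal.mul_le_mul_iff_right h0 ENNReal.ofReal_ne_top

theorem smul_mem_acceptSet_iff {Ω : Type*} [MeasurableSpace Ω] (P : Measure Ω)
    {d : ℕ} {ℓ : (Fin d → ℝ) → EReal}
    (hhom : ∀ t : ℝ, 0 < t → ∀ x : Fin d → ℝ, ℓ (t • x) = (t : EReal) * ℓ x)
    (X : Ω → Fin d → ℝ) {t : ℝ} (ht : 0 < t) (m : Fin d → ℝ) :
    t • m ∈ acceptSet ℓ P (fun ω => t • X ω) ↔ m ∈ acceptSet ℓ P X := by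
  simp only [acceptSet, Set.mem_ofPred_eq, ← smul_sub, hhom t ht]
  exact eexp_coe_mul_nonpos_iff P ht _

/-- Theorem 2.9: if `ℓ` is positively homogeneous, so is `R`. -/
theorem shortfallRisk_posHomogeneous
    {Ω : Type*} [MeasurableSpace Ω] (P : Measure Ω) [IsProbabilityMeasure P]
    {d : ℕ} (ℓ : (Fin d → ℝ) → EReal) (c : ℝ) (hℓ : IsLossFunction ℓ c)
    (hhom : ∀ t : ℝ, 0 < t → ∀ x : Fin d → ℝ, ℓ (t • x) = (t : EReal) * ℓ x)
    (X : Ω → Fin d → ℝ) (hX : MemOrliczHeart ℓ P X)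
    (lam : ℝ) (hlam : 0 < lam) :
    shortfallRisk ℓ P (fun ω => lam • X ω) = lam * shortfallRisk ℓ P X := by
  rw [shortfallRisk, shortfallRisk, ← smul_eq_mul, ← Real.sInf_smul_of_nonneg hlam.le]
  congr 1
  ext s
  simp only [Set.mem_smul_set, Set.mem_ofPred_eq]
  constructor
  · rintro ⟨m, hm, rfl⟩
    have hm' : lam • lam⁻¹ • m = m := smul_inv_smul₀ hlam.ne' m
    refine ⟨_, ⟨lam⁻¹ • m, ?_, rfl⟩, ?_⟩
    · rwa [← smul_mem_acceptSet_iff P hhom X hlam, hm']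
    · rw [Finset.smul_sum]
      exact Finset.sum_congr rfl fun k _ => congrFun hm' k
  · rintro ⟨_, ⟨m, hm, rfl⟩, rfl⟩
    exact ⟨lam • m, (smul_mem_acceptSet_iff P hhom X hlam m).2 hm, Finset.smul_sum⟩
end

section
/- Define ℓ : ℝ² → (−∞, ∞] by ℓ(x, y) = x + y + (x + y)⁺/(1 − y) − 1 if y < 1 and ℓ(x, y) = ∞ otherwise. Then inf{ m₁ + m₂ : (m₁, m₂) ∈ ℝ², ℓ(−m₁, −m₂) ≤ 0 } = −1, and this infimum is not attained: there is no (m₁, m₂) with ℓ(−m₁, −m₂) ≤ 0 and m₁ + m₂ = −1. (This shows that the infimum defining the multivariate shortfall risk R(0) of the deterministic position X = 0 need not be attained, i.e., a risk allocation may fail to exist.) -/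
/-!
Write `s = m₁ + m₂`. For `m₂ > -1` the constraint `ℓ(-m₁, -m₂) ≤ 0` reads
`max (-s) 0 / (1 + m₂) ≤ 1 + s`. If `s ≤ -1` the left side is positive and the right side is not,
so the constraint fails; if `s > -1` it holds once `m₂` is large. Hence the feasible totals form
exactly the open half-line `(-1, ∞)`, whose infimum `-1` is not attained.
-/

/-- The loss function of Example 3.1: `ℓ(x,y) = x + y + (x+y)⁺/(1-y) - 1` if `y < 1`,
and `∞` otherwise. -/
noncomputable def exLoss : ℝ × ℝ → EReal := fun p =>
  if p.2 < 1 then ((p.1 + p.2 + max (p.1 + p.2) 0 / (1 - p.2) - 1 : ℝ) : EReal) else ⊤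

theorem exLoss_neg_le_zero_iff (m : ℝ × ℝ) :
    exLoss (-m.1, -m.2) ≤ 0 ↔
      0 < 1 + m.2 ∧ max (-(m.1 + m.2)) 0 / (1 + m.2) ≤ 1 + (m.1 + m.2) := by
  have hs : -m.1 + -m.2 = -(m.1 + m.2) := by ring
  have ht : 1 - -m.2 = 1 + m.2 := by ring
  unfold exLoss
  simp only [hs, ht]
  split_ifs with h
  · rw [← EReal.coe_zero, EReal.coe_le_coe_iff]
    constructor
    · intro h'
      constructor <;> linarith
    · rintro ⟨_, h'⟩
      linarith
  · constructor
    · intro h'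
      simp at h'
    · rintro ⟨h', _⟩
      exact absurd (by linarith) h

theorem neg_one_lt_of_exLoss_le_zero {m : ℝ × ℝ} (h : exLoss (-m.1, -m.2) ≤ 0) :
    -1 < m.1 + m.2 := by
  obtain ⟨hpos, hle⟩ := (exLoss_neg_le_zero_iff m).1 h
  by_contra! hs
  have : 0 < max (-(m.1 + m.2)) 0 / (1 + m.2) :=
    div_pos (lt_max_of_lt_left (by linarith)) hpos
  linarith

theorem exists_exLoss_le_zero {s : ℝ} (hs : -1 < s) :
    ∃ m : ℝ × ℝ, exLoss (-m.1, -m.2) ≤ 0 ∧ s = m.1 + m.2 := by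
  have hs' : 0 < 1 + s := by linarith
  -- The constraint requires `max (-s) 0 ≤ (1 + s) * t` for `t = 1 + m₂`; the extra `1` in the
  -- numerator keeps `t` positive when `s ≥ 0`.
  obtain ⟨t, ht⟩ : ∃ t, t = (max (-s) 0 + 1) / (1 + s) := ⟨_, rfl⟩
  have htpos : 0 < t := by rw [ht]; positivity
  have hmul : (1 + s) * t = max (-s) 0 + 1 := by rw [ht]; field_simp
  refine ⟨(s - (t - 1), t - 1), (exLoss_neg_le_zero_iff _).2 ?_, by simp⟩
  simp only [sub_add_cancel, add_sub_cancel]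
  refine ⟨htpos, ?_⟩
  rw [div_le_iff₀ htpos]
  linarith

/-- Example 3.1: the shortfall risk `R(0) = inf {m₁ + m₂ : ℓ(-m₁,-m₂) ≤ 0}` equals `-1`,
but the infimum is not attained: no risk allocation exists. -/
theorem exLoss_inf_not_attained :
    IsGLB {s : ℝ | ∃ m : ℝ × ℝ, exLoss (-m.1, -m.2) ≤ 0 ∧ s = m.1 + m.2} (-1) ∧
      ¬ ∃ m : ℝ × ℝ, exLoss (-m.1, -m.2) ≤ 0 ∧ m.1 + m.2 = -1 := by
  have hset : {s : ℝ | ∃ m : ℝ × ℝ, exLoss (-m.1, -m.2) ≤ 0 ∧ s = m.1 + m.2} = Set.Ioi (-1) := by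
    ext s
    constructor
    · rintro ⟨m, hm, rfl⟩
      exact neg_one_lt_of_exLoss_le_zero hm
    · exact exists_exLoss_le_zero
  refine ⟨hset ▸ isGLB_Ioi, ?_⟩
  rintro ⟨m, hm, hsum⟩
  exact (neg_one_lt_of_exLoss_le_zero hm).ne' hsum
end
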